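/- Let $g \in L^2([-1,1]^d)$ with $g_1 = \sum_{m=1}^d f_{\{m\}}$, where $f_{\{m\}}$ is the part of the Haar expansion of $g$ depending only on the $m$-th coordinate and with mean zero in that coordinate. Let $\lambda$ be the projection onto affine functions and $\lambda_l$ the projection onto $\mathsf{SAff}_l$. Then $\lambda_l(g_1) = f_{\{l\}} + \sum_{m\ne l}\lambda(f_{\{m\}})$, and $\sum_{l=1}^d \|g_1 - \lambda_l(g_1)\|_2^2 = (d-1)\|g_1 - \lambda(g_1)\|_2^2$. -/

import Mathlib

/-!
The mechanism is a one-dimensional orthogonality. Put `c_m = ⟪x_m, f_m⟫ / ‖x_m‖²`. The residual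
`e_m = f_m - c_m x_m` is a function `r` of `x_m` alone satisfying `∫ r = 0` and `∫ r(t) t dt = 0`
on `[-1, 1]`. By Fubini, integrating over `x_m` first, `e_m` is orthogonal to every square-integrable
function which is affine in `x_m` once the other coordinates are frozen (`inner_residual_eq_zero`).
Three families have that property: affine functions, functions slice-affine in a direction `l ≠ m`,
and functions of a single coordinate `x_k`, `k ≠ m`.

The first family shows that `c_m x_m` is the best affine approximation of `f_m`, the second that
`g₁ - (f_l + ∑_{m ≠ l} c_m x_m) = ∑_{m ≠ l} e_m` is orthogonal to the functions slice-affine in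
direction `l`, and the third that the `e_m` are pairwise orthogonal. As a best approximation from a
set is determined by orthogonality of the residual (`eq_of_orthogonal`), this identifies all the
projections, and Pythagoras gives
`∑_l ‖g₁ - λ_l g₁‖² = ∑_l ∑_{m ≠ l} ‖e_m‖² = (d - 1) ∑_m ‖e_m‖² = (d - 1) ‖g₁ - λ g₁‖²`.
-/

open scoped BigOperators ENNReal
open MeasureTheory Classical
noncomputable section

def Box (d : ℕ) : Set (Fin d → ℝ) := Set.univ.pi fun _ => Set.Icc (-1 : ℝ) 1

def boxMeasure (d : ℕ) : Measure (Fin d → ℝ) := volume.restrict (Box d)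

def IsAffineFn {d : ℕ} (f : (Fin d → ℝ) → ℝ) : Prop :=
  ∃ (a : Fin d → ℝ) (b : ℝ), ∀ x, f x = ∑ i, a i * x i + b

def IsSliceAffine {d : ℕ} (i : Fin d) (f : (Fin d → ℝ) → ℝ) : Prop :=
  ∃ (a : ℝ → Fin d → ℝ) (b : ℝ → ℝ), ∀ x, f x = ∑ j, a (x i) j * x j + b (x i)

def AffL (d : ℕ) : Set (Lp ℝ 2 (boxMeasure d)) :=
  {h | ∃ f, IsAffineFn f ∧ ⇑h =ᵐ[boxMeasure d] f}

def SAffL (d : ℕ) (l : Fin d) : Set (Lp ℝ 2 (boxMeasure d)) :=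
  {h | ∃ f, IsSliceAffine l f ∧ ⇑h =ᵐ[boxMeasure d] f}


open scoped InnerProductSpace

/-- Lebesgue measure on `[-1, 1]`, the one-dimensional factor of `boxMeasure`. -/
def segMeasure : Measure ℝ := volume.restrict (Set.Icc (-1 : ℝ) 1)

instance : IsFiniteMeasure segMeasure := by
  unfold segMeasure; infer_instance

lemma boxMeasure_eq_pi (d : ℕ) : boxMeasure d = Measure.pi fun _ : Fin d => segMeasure := by
  unfold boxMeasure Box segMeasure
  rw [volume_pi, Measure.restrict_pi_pi]

instance (d : ℕ) : IsFiniteMeasure (boxMeasure d) := by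
  rw [boxMeasure_eq_pi]; infer_instance

lemma boxMeasure_real_univ (n : ℕ) : (boxMeasure n).real Set.univ ≠ 0 := by
  have : (boxMeasure n) Set.univ = 2 ^ n := by
    rw [boxMeasure_eq_pi, Measure.pi_univ]
    simp [segMeasure]
    norm_num
  simp [Measure.real, this]

/-- Splitting off the coordinate `m` of the box. -/
lemma measurePreserving_split (n : ℕ) (m : Fin (n + 1)) :
    MeasurePreserving (MeasurableEquiv.piFinSuccAbove (fun _ => ℝ) m)
      (boxMeasure (n + 1)) (segMeasure.prod (boxMeasure n)) := by
  rw [boxMeasure_eq_pi, boxMeasure_eq_pi]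
  exact measurePreserving_piFinSuccAbove (fun _ => segMeasure) m

lemma integral_coord (n : ℕ) (m : Fin (n + 1)) (r : ℝ → ℝ) :
    ∫ x, r (x m) ∂(boxMeasure (n + 1))
      = (boxMeasure n).real Set.univ * ∫ t, r t ∂segMeasure := by
  rw [← smul_eq_mul, ← integral_fun_fst, ← (measurePreserving_split n m).integral_comp'
    (fun z => r z.1)]
  rfl

lemma integrable_of_coord (n : ℕ) (m : Fin (n + 1)) (r : ℝ → ℝ)
    (h : Integrable (fun x => r (x m)) (boxMeasure (n + 1))) : Integrable r segMeasure := by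
  have hne : boxMeasure n ≠ 0 := fun h0 => boxMeasure_real_univ n (by simp [h0])
  refine (Integrable.comp_fst_iff (ν := boxMeasure n) hne).1 ?_
  exact ((measurePreserving_split n m).integrable_comp_emb
    (MeasurableEquiv.measurableEmbedding _)).1 h

/-- `F` is affine in the coordinate `m` when the other coordinates are frozen. -/
def AffineInCoord {d : ℕ} (m : Fin d) (F : (Fin d → ℝ) → ℝ) : Prop :=
  ∀ x, ∃ A B : ℝ, ∀ t, F (Function.update x m t) = A + B * t

/-- Integrating over `x_m` first kills the product of a function affine in `x_m` with a function
of `x_m` whose zeroth and first moments vanish. -/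
lemma integral_mul_coord_eq_zero (n : ℕ) (m : Fin (n + 1)) (r : ℝ → ℝ)
    (hr : Integrable r segMeasure) (hrt : Integrable (fun t => t * r t) segMeasure)
    (h0 : ∫ t, r t ∂segMeasure = 0) (h1 : ∫ t, t * r t ∂segMeasure = 0)
    (F : (Fin (n + 1) → ℝ) → ℝ) (hF : AffineInCoord m F) :
    ∫ x, F x * r (x m) ∂(boxMeasure (n + 1)) = 0 := by
  set e := MeasurableEquiv.piFinSuccAbove (fun _ : Fin (n + 1) => ℝ) m
  have key : ∫ x, F x * r (x m) ∂(boxMeasure (n + 1))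
      = ∫ z, F (e.symm z) * r z.1 ∂(segMeasure.prod (boxMeasure n)) := by
    rw [← (measurePreserving_split n m).integral_comp' (fun z => F (e.symm z) * r z.1)]
    refine integral_congr_ae (Filter.Eventually.of_forall fun x => ?_)
    change F x * r (x m) = F (e.symm (e x)) * r (x m)
    rw [e.symm_apply_apply]
  rw [key]
  by_cases hint : Integrable (fun z => F (e.symm z) * r z.1) (segMeasure.prod (boxMeasure n))
  · rw [integral_prod_symm _ hint]
    refine integral_eq_zero_of_ae (Filter.Eventually.of_forall fun y => ?_)
    obtain ⟨A, B, hAB⟩ := hF (m.insertNth (α := fun _ => ℝ) 0 y)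
    have hfun : (fun t => F (e.symm (t, y)) * r t) = fun t => A * r t + B * (t * r t) := by
      funext t
      have : F (e.symm (t, y)) = A + B * t := by
        rw [← hAB t, Fin.update_insertNth]; rfl
      rw [this]; ring
    change ∫ t, F (e.symm (t, y)) * r t ∂segMeasure = 0
    rw [hfun, integral_add (hr.const_mul A) (hrt.const_mul B), integral_const_mul,
      integral_const_mul, h0, h1]
    simp
  -- Without integrability of the product, the Bochner integral is zero by convention.
  · exact integral_undef hint

lemma ae_mem_box (d : ℕ) : ∀ᵐ x ∂(boxMeasure d), x ∈ Box d :=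
  ae_restrict_mem (MeasurableSet.univ_pi fun _ => measurableSet_Icc)

lemma memLp_coord {d : ℕ} (m : Fin d) :
    MemLp (fun x : Fin d → ℝ => x m) 2 (boxMeasure d) := by
  refine MemLp.of_bound (measurable_pi_apply m).aestronglyMeasurable 1 ?_
  filter_upwards [ae_mem_box d] with x hx
  rw [Real.norm_eq_abs, abs_le]
  exact hx m (Set.mem_univ m)

/-- The coordinate function `x_m` as an element of `L²`. -/
def coordL {d : ℕ} (m : Fin d) : Lp ℝ 2 (boxMeasure d) := (memLp_coord m).toLp _

lemma coeFn_coordL {d : ℕ} (m : Fin d) :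
    ⇑(coordL m) =ᵐ[boxMeasure d] fun x => x m := MemLp.coeFn_toLp _

lemma integral_coordL {d : ℕ} (m : Fin d) : ∫ x, coordL m x ∂(boxMeasure d) = 0 := by
  obtain _ | n := d
  · exact m.elim0
  · rw [integral_congr_ae (coeFn_coordL m), integral_coord n m (fun t => t)]
    have : ∫ t, t ∂segMeasure = 0 := by
      unfold segMeasure
      rw [integral_Icc_eq_integral_Ioc, ← intervalIntegral.integral_of_le (by norm_num)]
      simp
    rw [this, mul_zero]

lemma inner_L2 {d : ℕ} (f g : Lp ℝ 2 (boxMeasure d)) :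
    ⟪f, g⟫_ℝ = ∫ x, f x * g x ∂(boxMeasure d) := by
  rw [L2.inner_def]
  simp [mul_comm]

/-- A function of `x_m` in `L²` that is orthogonal to `1` and to `x_m` is orthogonal to
every element of `L²` that is affine in `x_m` once the other coordinates are frozen. -/
lemma inner_residual_eq_zero {d : ℕ} (m : Fin d) (e h : Lp ℝ 2 (boxMeasure d)) (r : ℝ → ℝ)
    (he : ⇑e =ᵐ[boxMeasure d] fun x => r (x m))
    (h0 : ∫ x, e x ∂(boxMeasure d) = 0) (h1 : ⟪coordL m, e⟫_ℝ = 0)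
    (F : (Fin d → ℝ) → ℝ) (hh : ⇑h =ᵐ[boxMeasure d] F) (hF : AffineInCoord m F) :
    ⟪h, e⟫_ℝ = 0 := by
  obtain _ | n := d
  · exact m.elim0
  have hX : (fun x => coordL m x * e x) =ᵐ[boxMeasure (n + 1)] fun x => x m * r (x m) := by
    filter_upwards [he, coeFn_coordL m] with x hx hx'
    rw [hx, hx']
  have hint : Integrable (fun x => coordL m x * e x) (boxMeasure (n + 1)) := by
    have := L2.integrable_inner (𝕜 := ℝ) (coordL m) e
    simpa [mul_comm] using this
  have hr : Integrable r segMeasure := integrable_of_coord n m r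
    (((Lp.memLp e).integrable (by norm_num)).congr he)
  have hrt : Integrable (fun t => t * r t) segMeasure :=
    integrable_of_coord n m (fun t => t * r t) (hint.congr hX)
  rw [integral_congr_ae he, integral_coord n m r] at h0
  rw [inner_L2, integral_congr_ae hX, integral_coord n m (fun t => t * r t)] at h1
  rw [inner_L2, ← integral_mul_coord_eq_zero n m r hr hrt
    ((mul_eq_zero.1 h0).resolve_left (boxMeasure_real_univ n))
    ((mul_eq_zero.1 h1).resolve_left (boxMeasure_real_univ n)) F hF]
  refine integral_congr_ae ?_
  filter_upwards [he, hh] with x hx hx'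
  rw [hx, hx']

lemma sum_mul_update {d : ℕ} (m : Fin d) (a x : Fin d → ℝ) (t : ℝ) :
    ∑ j, a j * Function.update x m t j
      = ∑ j ∈ Finset.univ.erase m, a j * x j + a m * t := by
  rw [← Finset.sum_erase_add _ _ (Finset.mem_univ m), Function.update_self]
  congr 1
  refine Finset.sum_congr rfl fun j hj => ?_
  rw [Function.update_of_ne (Finset.ne_of_mem_erase hj)]

lemma IsAffineFn.affineInCoord {d : ℕ} {F : (Fin d → ℝ) → ℝ} (h : IsAffineFn F) (m : Fin d) :
    AffineInCoord m F := by
  obtain ⟨a, b, hab⟩ := h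
  intro x
  refine ⟨∑ j ∈ Finset.univ.erase m, a j * x j + b, a m, fun t => ?_⟩
  rw [hab, sum_mul_update]; ring

lemma IsSliceAffine.affineInCoord {d : ℕ} {F : (Fin d → ℝ) → ℝ} {l : Fin d}
    (h : IsSliceAffine l F) {m : Fin d} (hml : l ≠ m) : AffineInCoord m F := by
  obtain ⟨a, b, hab⟩ := h
  intro x
  refine ⟨∑ j ∈ Finset.univ.erase m, a (x l) j * x j + b (x l), a (x l) m, fun t => ?_⟩
  rw [hab, Function.update_of_ne hml, sum_mul_update]; ring

lemma IsAffineFn.isSliceAffine {d : ℕ} {F : (Fin d → ℝ) → ℝ} (h : IsAffineFn F) (l : Fin d) :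
    IsSliceAffine l F := by
  obtain ⟨a, b, hab⟩ := h
  exact ⟨fun _ => a, fun _ => b, hab⟩

lemma AffL_subset_SAffL (d : ℕ) (l : Fin d) : AffL d ⊆ SAffL d l :=
  fun _ ⟨F, hF, hh⟩ => ⟨F, hF.isSliceAffine l, hh⟩

lemma AffL_sum_mem {d : ℕ} {ι : Type*} (s : Finset ι) (f : ι → Lp ℝ 2 (boxMeasure d))
    (hf : ∀ i ∈ s, f i ∈ AffL d) : ∑ i ∈ s, f i ∈ AffL d := by
  refine Finset.sum_induction f (· ∈ AffL d) ?_ ?_ hf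
  · rintro p q ⟨F, ⟨a, b, hF⟩, hp⟩ ⟨G, ⟨a', b', hG⟩, hq⟩
    refine ⟨F + G, ⟨a + a', b + b', fun x => ?_⟩, (Lp.coeFn_add p q).trans (hp.add hq)⟩
    simp only [Pi.add_apply, hF, hG, add_mul, Finset.sum_add_distrib]
    ring
  · exact ⟨0, ⟨0, 0, by simp⟩, Lp.coeFn_zero _ _ _⟩

lemma SAffL_add_mem {d : ℕ} {l : Fin d} {p q : Lp ℝ 2 (boxMeasure d)}
    (hp : p ∈ SAffL d l) (hq : q ∈ SAffL d l) : p + q ∈ SAffL d l := by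
  obtain ⟨F, ⟨a, b, hF⟩, hp⟩ := hp
  obtain ⟨G, ⟨a', b', hG⟩, hq⟩ := hq
  refine ⟨F + G, ⟨a + a', b + b', fun x => ?_⟩, (Lp.coeFn_add p q).trans (hp.add hq)⟩
  simp only [Pi.add_apply, hF, hG, add_mul, Finset.sum_add_distrib]
  ring

lemma smul_coordL_mem {d : ℕ} (m : Fin d) (c : ℝ) : c • coordL m ∈ AffL d := by
  refine ⟨fun x => c * x m, ⟨Pi.single m c, 0, fun x => ?_⟩, ?_⟩
  · simp [Pi.single_apply, ite_mul]
  · filter_upwards [Lp.coeFn_smul c (coordL m), coeFn_coordL m] with x hx hx'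
    rw [hx, Pi.smul_apply, hx', smul_eq_mul]

/-- A point of `V` whose residual is orthogonal to `V` is the only best approximation from `V`;
no linear structure on `V` is required. -/
lemma eq_of_orthogonal {E : Type*} [NormedAddCommGroup E] [InnerProductSpace ℝ E] (V : Set E)
    (g p q : E) (hp : p ∈ V) (hq : q ∈ V) (horth : ∀ h ∈ V, ⟪h, g - p⟫_ℝ = 0)
    (hmin : ∀ h ∈ V, ‖g - q‖ ≤ ‖g - h‖) : q = p := by
  have h1 : ⟪p - q, g - p⟫_ℝ = 0 := by rw [inner_sub_left, horth p hp, horth q hq, sub_zero]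
  have h2 := norm_add_sq_real (p - q) (g - p)
  rw [h1, show p - q + (g - p) = g - q by abel] at h2
  have h3 := pow_le_pow_left₀ (norm_nonneg _) (hmin p hp) 2
  have h4 : ‖p - q‖ = 0 := by
    have := sq_nonneg ‖p - q‖
    exact pow_eq_zero_iff two_ne_zero |>.1 (by linarith)
  exact (sub_eq_zero.1 (norm_eq_zero.1 h4)).symm

lemma norm_sum_sq_of_orthogonal {E ι : Type*} [NormedAddCommGroup E] [InnerProductSpace ℝ E]
    (e : ι → E) (he : ∀ i j, i ≠ j → ⟪e i, e j⟫_ℝ = 0) (s : Finset ι) :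
    ‖∑ i ∈ s, e i‖ ^ 2 = ∑ i ∈ s, ‖e i‖ ^ 2 := by
  rw [← real_inner_self_eq_norm_sq, sum_inner]
  refine Finset.sum_congr rfl fun i hi => ?_
  rw [inner_sum, Finset.sum_eq_single_of_mem i hi fun j _ hj => he i j hj.symm,
    real_inner_self_eq_norm_sq]

/-- Let `g₁ = ∑_m f_{{m}}` where `f_{{m}} ∈ L²([-1,1]^d)` depends only
on the `m`-th coordinate and has mean zero.  Let `λ` denote best affine approximation and
`λ_l` best slice-affine approximation in direction `l`.  Then
`λ_l(g₁) = f_{{l}} + ∑_{m ≠ l} λ(f_{{m}})` and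
`∑_l ‖g₁ - λ_l(g₁)‖² = (d-1)‖g₁ - λ(g₁)‖²`. -/
theorem slice_affine_projection_g1 (d : ℕ)
    (fm : Fin d → Lp ℝ 2 (boxMeasure d))
    (hdep : ∀ m, ∃ u : ℝ → ℝ, ⇑(fm m) =ᵐ[boxMeasure d] fun x => u (x m))
    (hmean : ∀ m, ∫ x, fm m x ∂(boxMeasure d) = 0)
    (g1 : Lp ℝ 2 (boxMeasure d)) (hg1 : g1 = ∑ m : Fin d, fm m)
    (lam : Lp ℝ 2 (boxMeasure d)) (hlam : lam ∈ AffL d)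
    (hlammin : ∀ h ∈ AffL d, ‖g1 - lam‖ ≤ ‖g1 - h‖)
    (lfm : Fin d → Lp ℝ 2 (boxMeasure d)) (hlfm : ∀ m, lfm m ∈ AffL d)
    (hlfmmin : ∀ m, ∀ h ∈ AffL d, ‖fm m - lfm m‖ ≤ ‖fm m - h‖)
    (lgl : Fin d → Lp ℝ 2 (boxMeasure d)) (hlgl : ∀ l, lgl l ∈ SAffL d l)
    (hlglmin : ∀ l, ∀ h ∈ SAffL d l, ‖g1 - lgl l‖ ≤ ‖g1 - h‖) :
    (∀ l, lgl l = fm l + ∑ m ∈ Finset.univ.erase l, lfm m) ∧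
    ∑ l : Fin d, ‖g1 - lgl l‖ ^ 2 = ((d : ℝ) - 1) * ‖g1 - lam‖ ^ 2 := by
  set c : Fin d → ℝ := fun m => ⟪coordL m, fm m⟫_ℝ / ⟪coordL m, coordL m⟫_ℝ with hc
  set e : Fin d → Lp ℝ 2 (boxMeasure d) := fun m => fm m - c m • coordL m with he
  have he_dep : ∀ m, ∃ r : ℝ → ℝ, ⇑(e m) =ᵐ[boxMeasure d] fun x => r (x m) := by
    intro m
    obtain ⟨u, hu⟩ := hdep m
    refine ⟨fun t => u t - c m * t, ?_⟩
    filter_upwards [Lp.coeFn_sub (fm m) (c m • coordL m), Lp.coeFn_smul (c m) (coordL m),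
      coeFn_coordL m, hu] with x h1 h2 h3 h4
    rw [h1, Pi.sub_apply, h2, Pi.smul_apply, h3, h4, smul_eq_mul]
  have he_mean : ∀ m, ∫ x, e m x ∂(boxMeasure d) = 0 := by
    intro m
    have h : ⇑(e m) =ᵐ[boxMeasure d] fun x => fm m x - c m * coordL m x := by
      filter_upwards [Lp.coeFn_sub (fm m) (c m • coordL m),
        Lp.coeFn_smul (c m) (coordL m)] with x h1 h2
      rw [h1, Pi.sub_apply, h2, Pi.smul_apply, smul_eq_mul]
    rw [integral_congr_ae h, integral_sub ((Lp.memLp (fm m)).integrable (by norm_num))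
      (((Lp.memLp (coordL m)).integrable (by norm_num)).const_mul _), integral_const_mul,
      hmean, integral_coordL]
    simp
  have he_coord : ∀ m, ⟪coordL m, e m⟫_ℝ = 0 := by
    intro m
    rw [he, inner_sub_right, inner_smul_right]
    -- If `x_m` had norm zero, it would vanish in `L²`, so the junk value of `c m` is harmless.
    by_cases hX : ⟪coordL m, coordL m⟫_ℝ = 0
    · rw [inner_self_eq_zero.1 hX]; simp
    · rw [hc, div_mul_cancel₀ _ hX, sub_self]
  have he_orth : ∀ m (h : Lp ℝ 2 (boxMeasure d)) (F : (Fin d → ℝ) → ℝ),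
      ⇑h =ᵐ[boxMeasure d] F → AffineInCoord m F → ⟪h, e m⟫_ℝ = 0 := by
    intro m h F hh hF
    obtain ⟨r, hr⟩ := he_dep m
    exact inner_residual_eq_zero m (e m) h r hr (he_mean m) (he_coord m) F hh hF
  have he_aff : ∀ m, ∀ h ∈ AffL d, ⟪h, e m⟫_ℝ = 0 := by
    rintro m h ⟨F, hF, hh⟩
    exact he_orth m h F hh (hF.affineInCoord m)
  have he_saff : ∀ l m, l ≠ m → ∀ h ∈ SAffL d l, ⟪h, e m⟫_ℝ = 0 := by
    rintro l m hlm h ⟨F, hF, hh⟩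
    exact he_orth m h F hh (hF.affineInCoord hlm)
  have he_pair : ∀ k m, k ≠ m → ⟪e k, e m⟫_ℝ = 0 := by
    intro k m hkm
    obtain ⟨r, hr⟩ := he_dep k
    -- A function of `x_k` is constant on the slices in direction `k`, hence slice-affine.
    exact he_saff k m hkm _ ⟨_, ⟨fun _ => 0, r, by simp⟩, hr⟩
  have hlfm_eq : ∀ m, lfm m = c m • coordL m := fun m =>
    eq_of_orthogonal (AffL d) (fm m) _ _ (smul_coordL_mem m _) (hlfm m) (he_aff m) (hlfmmin m)
  have he_eq : ∀ m, e m = fm m - lfm m := fun m => by rw [hlfm_eq]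
  have hlam_res : g1 - ∑ m, lfm m = ∑ m, e m := by
    simp only [he_eq, Finset.sum_sub_distrib, hg1]
  have hlam_eq : lam = ∑ m, lfm m := by
    refine eq_of_orthogonal (AffL d) g1 _ _ (AffL_sum_mem _ _ fun m _ => hlfm m) hlam
      (fun h hh => ?_) hlammin
    rw [hlam_res, inner_sum]
    exact Finset.sum_eq_zero fun m _ => he_aff m h hh
  have hlgl_res : ∀ l, g1 - (fm l + ∑ m ∈ Finset.univ.erase l, lfm m)
      = ∑ m ∈ Finset.univ.erase l, e m := by
    intro l
    simp only [he_eq, Finset.sum_sub_distrib]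
    rw [hg1, ← Finset.add_sum_erase _ _ (Finset.mem_univ l)]
    abel
  have hlgl_eq : ∀ l, lgl l = fm l + ∑ m ∈ Finset.univ.erase l, lfm m := by
    intro l
    refine eq_of_orthogonal (SAffL d l) g1 _ _ (SAffL_add_mem ?_
      (AffL_subset_SAffL d l (AffL_sum_mem _ _ fun m _ => hlfm m))) (hlgl l)
      (fun h hh => ?_) (hlglmin l)
    · obtain ⟨u, hu⟩ := hdep l
      exact ⟨_, ⟨fun _ => 0, u, by simp⟩, hu⟩
    · rw [hlgl_res, inner_sum]
      exact Finset.sum_eq_zero fun m hm => he_saff l m (Finset.ne_of_mem_erase hm).symm h hh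
  refine ⟨hlgl_eq, ?_⟩
  have hl : ∀ l, ‖g1 - lgl l‖ ^ 2 = ∑ m, ‖e m‖ ^ 2 - ‖e l‖ ^ 2 := by
    intro l
    rw [hlgl_eq, hlgl_res, norm_sum_sq_of_orthogonal e he_pair,
      ← Finset.add_sum_erase _ _ (Finset.mem_univ l)]
    ring
  rw [Finset.sum_congr rfl fun l _ => hl l, hlam_eq, hlam_res,
    norm_sum_sq_of_orthogonal e he_pair, Finset.sum_sub_distrib]
  simp only [Finset.sum_const, Finset.card_univ, Fintype.card_fin, nsmul_eq_mul]
  ring
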